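/- arXiv:1003.2674 — 4 statements merged into one kernel-verified Lean document; each statement's English description precedes it below -/
import Mathlib

section
/- (Lemma 1) Let F = {f_i : B_i → int(B)} be a locally contractive piecewise continuous map on (B,{B_i}) with separation line S (the separation property is not needed). If there exists an integer k₀ ≥ 1 such that F^{k₀}(B) ∩ S = ∅, then F is finally periodic: there exist at least one and at most finitely many periodic orbits of F whose union equals L⁺(F), and every future orbit of every point of B has one of these periodic orbits as its limit set. -/
/-!
Let `K = F^{k₀}(B)`. It is compact, forward invariant, and disjoint from the separation line, so
each of its points lies in the interior of exactly one piece; hence `F` restricts to a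
single-valued map `g : K → K`. A Lebesgue number `δ` of the cover of `K` by the interiors of the
pieces makes `g` contract by `lam` any two points of `K` at distance `< δ`
(`iterate_contract` iterates this).

For such a local contraction on a compact set, every orbit comes `δ`-close to its own past at some
time lag `p`. Then `g^p` contracts there, so the orbit is asymptotic to that of a fixed point of
`g^p` (`exists_periodic_attractor`). Two distinct periodic points cannot be `δ`-close, since
applying a common period would bring them closer, so by compactness there are finitely many
(`finite_periodic`). Finally a sequence asymptotic to a periodic one has the range of the latter as
its limit set (`orbitLimit_eq_range`). Every orbit of `F` enters `K` after `k₀` steps, and then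
follows `g`.
-/

/-!
Common definitions for "Topological dynamics of generic piecewise continuous
contractive maps in n dimensions" (Catsigeras–Budelli).

`X` plays the role of the compact set `B ⊆ ℝⁿ` (homeomorphic to a compact ball),
endowed with a metric `dist` inducing its subspace topology: we model this by a
metric space `X` together with a topological embedding `j : X → ℝⁿ` and a
homeomorphism of `X` with the closed unit ball.
-/

namespace PWC

variable {X : Type} [MetricSpace X]

/-- A finite partition of the space `X` (the ball `B`): `m` nonempty compact pieces
covering `X`, with pairwise disjoint interiors. -/
def IsFinPartition {m : ℕ} (P : Fin m → Set X) : Prop :=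
  (∀ i, (P i).Nonempty) ∧ (∀ i, IsCompact (P i)) ∧ (⋃ i, P i) = Set.univ ∧
    ∀ i j : Fin m, i ≠ j → interior (P i) ∩ interior (P j) = ∅

/-- The separation line `S = ⋃ i ∂B_i` (frontiers taken in `B`). -/
def sepLine {m : ℕ} (P : Fin m → Set X) : Set X := ⋃ i, frontier (P i)

/-- A piecewise continuous map on `(B, {B_i})`: each `f i` is a homeomorphism of the
piece `P i` onto its image, and the image is contained in the interior of `B`
(i.e. of `Set.range j`) in `ℝⁿ`. -/
def IsPCMap {n m : ℕ} (j : X → EuclideanSpace ℝ (Fin n)) (P : Fin m → Set X)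
    (f : Fin m → X → X) : Prop :=
  ∀ i, ContinuousOn (f i) (P i) ∧ Set.InjOn (f i) (P i) ∧
    (∃ finv : X → X, ContinuousOn finv (f i '' P i) ∧ ∀ x ∈ P i, finv (f i x) = x) ∧
    ∀ x ∈ P i, j (f i x) ∈ interior (Set.range j)

/-- The separation property: different continuity pieces have disjoint images. -/
def SepProp {m : ℕ} (P : Fin m → Set X) (f : Fin m → X → X) : Prop :=
  ∀ i i' : Fin m, i ≠ i' → (f i '' P i) ∩ (f i' '' P i') = ∅

/-- `F` is uniformly locally contractive with contraction rate `lam ∈ (0,1)`. -/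
def LocContr {m : ℕ} (P : Fin m → Set X) (f : Fin m → X → X) (lam : ℝ) : Prop :=
  0 < lam ∧ lam < 1 ∧ ∀ i, ∀ x ∈ P i, ∀ y ∈ P i, dist (f i x) (f i y) ≤ lam * dist x y

/-- Image of a set: `F(H) = ⋃_{x ∈ H} {f i x : x ∈ B_i}`. -/
def setImage {m : ℕ} (P : Fin m → Set X) (f : Fin m → X → X) (H : Set X) : Set X :=
  ⋃ i, f i '' (P i ∩ H)

/-- Iterated image: `F⁰(H) = H`, `F^{k+1}(H) = F^k(F(H)) = F(F^k(H))`. -/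
def iterSet {m : ℕ} (P : Fin m → Set X) (f : Fin m → X → X) : ℕ → Set X → Set X
  | 0, H => H
  | k + 1, H => setImage P f (iterSet P f k H)

/-- A future orbit: `o (k+1) ∈ F (o k)` for all `k`. -/
def IsOrbit {m : ℕ} (P : Fin m → Set X) (f : Fin m → X → X) (o : ℕ → X) : Prop :=
  ∀ k : ℕ, ∃ i, o k ∈ P i ∧ o (k + 1) = f i (o k)

/-- The limit set of a sequence: points which are limits of some subsequence. -/
def orbitLimit (o : ℕ → X) : Set X :=
  {y | ∃ φ : ℕ → ℕ, StrictMono φ ∧ Filter.Tendsto (fun k => o (φ k)) Filter.atTop (nhds y)}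

/-- The limit set `L⁺(F)`: union of the limit sets of all future orbits of all points. -/
def limitSet {m : ℕ} (P : Fin m → Set X) (f : Fin m → X → X) : Set X :=
  ⋃ o ∈ {o : ℕ → X | IsOrbit P f o}, orbitLimit o

/-- `L` is a periodic orbit (limit cycle) of minimal period `p ≥ 1` of `F`. -/
def IsPeriodicOrbit {m : ℕ} (P : Fin m → Set X) (f : Fin m → X → X) (L : Set X)
    (p : ℕ) : Prop :=
  1 ≤ p ∧ ∃ o : ℕ → X, IsOrbit P f o ∧ (∀ k, o (k + p) = o k) ∧
    (∀ q : ℕ, 1 ≤ q → (∀ k, o (k + q) = o k) → p ≤ q) ∧ L = Set.range o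

/-- `F` is finally periodic: its limit set is the union of (at least one and) finitely
many periodic orbits. -/
def FinallyPeriodic {m : ℕ} (P : Fin m → Set X) (f : Fin m → X → X) : Prop :=
  ∃ (N : ℕ) (L : Fin N → Set X) (p : Fin N → ℕ), 1 ≤ N ∧
    (∀ a, IsPeriodicOrbit P f (L a) (p a)) ∧ limitSet P f = ⋃ a, L a

/-- `G = {g_i : A_i → B}` (with contraction rate `lamG`) is an `ε`-perturbation of
`F = {f_i : B_i → B}` (with contraction rate `lamF`). -/
def IsPerturbation {m : ℕ} (P : Fin m → Set X) (f : Fin m → X → X) (lamF : ℝ)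
    (Q : Fin m → Set X) (g : Fin m → X → X) (lamG : ℝ) (ε : ℝ) : Prop :=
  (∀ i, ∀ x ∈ P i ∩ Q i, dist (f i x) (g i x) < ε) ∧ |lamF - lamG| < ε ∧
    ∀ i, Metric.hausdorffDist (P i) (Q i) < ε

/-- The limit cycles `L a` (of periods `p a`) of `F` are persistent. -/
def PersistentCycles {n m : ℕ} (j : X → EuclideanSpace ℝ (Fin n)) (P : Fin m → Set X)
    (f : Fin m → X → X) (lamF : ℝ) {N : ℕ} (L : Fin N → Set X) (p : Fin N → ℕ) : Prop :=
  ∀ εs : ℝ, 0 < εs → ∃ ε : ℝ, 0 < ε ∧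
    ∀ (Q : Fin m → Set X) (g : Fin m → X → X) (lamG : ℝ),
      IsFinPartition Q → IsPCMap j Q g → LocContr Q g lamG →
      IsPerturbation P f lamF Q g lamG ε →
      ∃ LG : Fin N → Set X, (∀ a, IsPeriodicOrbit Q g (LG a) (p a)) ∧
        limitSet Q g = (⋃ a, LG a) ∧ ∀ a, Metric.hausdorffDist (LG a) (L a) < εs

/-- `F` is finally periodic with persistent limit cycles. -/
def FPwithPersistent {n m : ℕ} (j : X → EuclideanSpace ℝ (Fin n)) (P : Fin m → Set X)
    (f : Fin m → X → X) (lamF : ℝ) : Prop :=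
  ∃ (N : ℕ) (L : Fin N → Set X) (p : Fin N → ℕ), 1 ≤ N ∧
    (∀ a, IsPeriodicOrbit P f (L a) (p a)) ∧ limitSet P f = (⋃ a, L a) ∧
    PersistentCycles j P f lamF L p

/-- The atom of generation `w.length` with word `w`; the head of the list is the
*last* map applied, i.e. `atom [i_k, …, i_1] = f_{i_k} ∘ ⋯ ∘ f_{i_1} (B_{i_1})`,
restricted to the set where the composition is defined. -/
def atom {m : ℕ} (P : Fin m → Set X) (f : Fin m → X → X) : List (Fin m) → Set X
  | [] => Set.univ
  | i :: w => f i '' (P i ∩ atom P f w)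

end PWC


open PWC

open Function Filter Topology

/-! ### Local contractions of a compact set -/

section LocalContraction

variable {X : Type} [MetricSpace X] {g : X → X} {K : Set X} {lam δ : ℝ}

lemma iterate_contract (hl0 : 0 < lam) (hl1 : lam < 1) (hm : Set.MapsTo g K K)
    (hc : ∀ x ∈ K, ∀ y ∈ K, dist x y < δ → dist (g x) (g y) ≤ lam * dist x y)
    {x y : X} (hx : x ∈ K) (hy : y ∈ K) (hd : dist x y < δ) (n : ℕ) :
    dist (g^[n] x) (g^[n] y) ≤ lam ^ n * dist x y := by
  induction n with
  | zero => simp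
  | succ n ih =>
    have h1 : lam ^ n * dist x y ≤ dist x y :=
      mul_le_of_le_one_left dist_nonneg (pow_le_one₀ hl0.le hl1.le)
    rw [iterate_succ_apply', iterate_succ_apply']
    calc _ ≤ lam * dist (g^[n] x) (g^[n] y) :=
          hc _ (hm.iterate n hx) _ (hm.iterate n hy) (by linarith)
      _ ≤ lam * (lam ^ n * dist x y) := by gcongr
      _ = _ := by ring

lemma finite_periodic (hl0 : 0 < lam) (hl1 : lam < 1) (hδ : 0 < δ) (hK : IsCompact K)
    (hm : Set.MapsTo g K K)
    (hc : ∀ x ∈ K, ∀ y ∈ K, dist x y < δ → dist (g x) (g y) ≤ lam * dist x y) :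
    {z | z ∈ K ∧ z ∈ periodicPts g}.Finite := by
  by_contra hinf
  obtain ⟨a, haK, hacc⟩ := Set.Infinite.exists_accPt_of_subset_isCompact hinf hK
    (fun z hz => hz.1)
  -- An accumulation point has two distinct periodic points within `δ / 2` of it.
  rw [accPt_iff_nhds] at hacc
  obtain ⟨x, ⟨hxb, hxK, hxp⟩, hxa⟩ := hacc _ (Metric.ball_mem_nhds a (half_pos hδ))
  obtain ⟨y, ⟨hyb, hyK, hyp⟩, hya⟩ := hacc _ (Metric.ball_mem_nhds a
    (lt_min (half_pos hδ) (dist_pos.2 hxa)))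
  rw [Metric.mem_ball, lt_min_iff] at hyb
  rw [Metric.mem_ball] at hxb
  have hne : x ≠ y := fun h => by rw [h] at hyb; exact lt_irrefl _ hyb.2
  have hd : dist x y < δ := by
    have := dist_triangle_right x y a
    linarith [hyb.1]
  obtain ⟨p, hp, hpx⟩ := hxp
  obtain ⟨q, hq, hqy⟩ := hyp
  have h := iterate_contract hl0 hl1 hm hc hxK hyK hd (p * q)
  rw [(hpx.mul_const q).eq, (hqy.const_mul p).eq] at h
  have h1 : lam ^ (p * q) < 1 := pow_lt_one₀ hl0.le hl1 (Nat.mul_pos hp hq).ne'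
  have h2 := dist_pos.2 hne
  nlinarith

/-- Every orbit in `K` is, up to a time shift `c`, asymptotic to the orbit of a periodic point. -/
lemma exists_periodic_attractor (hl0 : 0 < lam) (hl1 : lam < 1) (hδ : 0 < δ) (hK : IsCompact K)
    (hm : Set.MapsTo g K K)
    (hc : ∀ x ∈ K, ∀ y ∈ K, dist x y < δ → dist (g x) (g y) ≤ lam * dist x y)
    {x : X} (hx : x ∈ K) :
    ∃ z ∈ K, z ∈ periodicPts g ∧
      ∃ c, Tendsto (fun n => dist (g^[n + c] x) (g^[n] z)) atTop (𝓝 0) := by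
  -- Recurrence: two terms of the orbit, at times `s < t`, are `δ`-close.
  obtain ⟨s, t, hst, hd⟩ : ∃ s t, s < t ∧ dist (g^[s] x) (g^[t] x) < δ := by
    obtain ⟨a, -, φ, hφ, hlim⟩ := hK.tendsto_subseq (fun n => hm.iterate n hx)
    obtain ⟨N, hN⟩ := Metric.tendsto_atTop.1 hlim (δ / 2) (half_pos hδ)
    refine ⟨φ N, φ (N + 1), hφ (Nat.lt_succ_self N), ?_⟩
    have h1 := hN N le_rfl
    have h2 := hN (N + 1) (Nat.le_succ N)
    have := dist_triangle_right (g^[φ N] x) (g^[φ (N + 1)] x) a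
    simp only [comp_apply] at h1 h2
    linarith
  obtain ⟨p, hp, rfl⟩ : ∃ p, 0 < p ∧ t = p + s := ⟨t - s, by omega, by omega⟩
  have hyK : g^[s] x ∈ K := hm.iterate s hx
  rw [iterate_add_apply] at hd
  set y := g^[s] x with hy
  have hpy : g^[p] y ∈ K := hm.iterate p hyK
  have hlp : lam ^ p < 1 := pow_lt_one₀ hl0.le hl1 hp.ne'
  -- The orbit of `y` sampled at multiples of `p` is Cauchy.
  have hcau : CauchySeq (fun k => g^[p * k] y) := by
    refine cauchySeq_of_le_geometric (lam ^ p) (dist y (g^[p] y)) hlp fun k => ?_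
    have := iterate_contract hl0 hl1 hm hc hyK hpy hd (p * k)
    rw [← iterate_add_apply g (p * k) p, pow_mul] at this
    rw [Nat.mul_succ]
    linarith
  obtain ⟨z, hzK, hz⟩ := cauchySeq_tendsto_of_isComplete hK.isComplete
    (fun k => hm.iterate (p * k) hyK) hcau
  obtain ⟨N, hN⟩ := Metric.tendsto_atTop.1 hz δ hδ
  -- `z` is fixed by `g^p`, by continuity of `g^p` at `z` along the orbit.
  have hfix : g^[p] z = z := by
    have h1 : Tendsto (fun k => g^[p * (k + 1)] y) atTop (𝓝 z) :=
      hz.comp (tendsto_add_atTop_nat 1)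
    have h2 : Tendsto (fun k => g^[p * (k + 1)] y) atTop (𝓝 (g^[p] z)) := by
      rw [tendsto_iff_dist_tendsto_zero] at hz ⊢
      refine squeeze_zero' (Eventually.of_forall fun _ => dist_nonneg) ?_ hz
      filter_upwards [eventually_ge_atTop N] with k hk
      have := iterate_contract hl0 hl1 hm hc (hm.iterate (p * k) hyK) hzK (hN k hk) p
      rw [← iterate_add_apply, add_comm, ← Nat.mul_succ] at this
      exact this.trans (mul_le_of_le_one_left dist_nonneg hlp.le)
    exact tendsto_nhds_unique h2 h1
  refine ⟨z, hzK, ⟨p, hp, hfix⟩, p * N + s, ?_⟩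
  have hgeo : Tendsto (fun n : ℕ => lam ^ n * dist (g^[p * N] y) z) atTop (𝓝 0) := by
    simpa using (tendsto_pow_atTop_nhds_zero_of_lt_one hl0.le hl1).mul_const
      (dist (g^[p * N] y) z)
  refine squeeze_zero (fun _ => dist_nonneg) (fun n => ?_) hgeo
  rw [iterate_add_apply g n, iterate_add_apply g (p * N) s, ← hy]
  exact iterate_contract hl0 hl1 hm hc (hm.iterate (p * N) hyK) hzK (hN N le_rfl) n

end LocalContraction

/-! ### Limit sets and iterated images -/

section Orbits

lemma orbitLimit_eq_range {X : Type} [MetricSpace X] {o u : ℕ → X} {p c : ℕ}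
    (hp : 0 < p) (hu : u.Periodic p)
    (h : Tendsto (fun n => dist (o (n + c)) (u n)) atTop (𝓝 0)) :
    orbitLimit o = Set.range u := by
  apply Set.Subset.antisymm
  · rintro y ⟨φ, hφ, hlim⟩
    have hfin : (Set.range u).Finite := by
      refine ((Set.finite_Iio p).image u).subset ?_
      rintro _ ⟨k, rfl⟩
      exact ⟨k % p, Nat.mod_lt _ hp, hu.map_mod_nat k⟩
    have hsub : Tendsto (fun k => φ k - c) atTop atTop :=
      (tendsto_sub_atTop_nat c).comp hφ.tendsto_atTop
    have h1 : Tendsto (fun k => dist (o (φ k)) (u (φ k - c))) atTop (𝓝 0) := by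
      refine (h.comp hsub).congr' ?_
      filter_upwards [hφ.tendsto_atTop.eventually_ge_atTop c] with k hk
      simp [Nat.sub_add_cancel hk]
    exact hfin.isClosed.mem_of_tendsto (hlim.congr_dist h1)
      (Eventually.of_forall fun k => ⟨_, rfl⟩)
  · rintro _ ⟨k, rfl⟩
    refine ⟨fun i => (k + i * p) + c, fun a b hab => ?_, ?_⟩
    · have := Nat.mul_lt_mul_of_pos_right hab hp
      show k + a * p + c < k + b * p + c
      omega
    · have ht : Tendsto (fun i => k + i * p) atTop atTop :=
        tendsto_atTop_mono (fun i => (Nat.le_mul_of_pos_right i hp).trans (Nat.le_add_left _ k))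
          tendsto_id
      rw [tendsto_iff_dist_tendsto_zero]
      refine (h.comp ht).congr fun i => ?_
      have : u (k + i * p) = u k := by simpa using hu.nat_mul i k
      simp [this]

variable {X : Type} {m : ℕ} {P : Fin m → Set X} {f : Fin m → X → X}

lemma iterSet_succ_subset (k : ℕ) :
    iterSet P f (k + 1) Set.univ ⊆ iterSet P f k Set.univ := by
  induction k with
  | zero => exact Set.subset_univ _
  | succ k ih =>
    exact Set.iUnion_mono fun i => Set.image_mono (Set.inter_subset_inter_right _ ih)

lemma isCompact_iterSet [MetricSpace X] [CompactSpace X] (hP : ∀ i, IsCompact (P i))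
    (hf : ∀ i, ContinuousOn (f i) (P i)) (k : ℕ) : IsCompact (iterSet P f k Set.univ) := by
  induction k with
  | zero => exact isCompact_univ
  | succ k ih =>
    exact isCompact_iUnion fun i =>
      ((hP i).inter ih).image_of_continuousOn ((hf i).mono Set.inter_subset_left)

lemma isOrbit_mem_iterSet {o : ℕ → X} (ho : IsOrbit P f o) (k : ℕ) :
    o k ∈ iterSet P f k Set.univ := by
  induction k with
  | zero => trivial
  | succ k ih =>
    obtain ⟨i, hi, he⟩ := ho k
    exact Set.mem_iUnion.2 ⟨i, o k, ⟨hi, ih⟩, he.symm⟩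

end Orbits

/-- Lemma 1: If `F^{k₀}(B) ∩ S = ∅` for some `k₀ ≥ 1`, then `F` is
finally periodic: there are at least one and at most finitely many periodic orbits whose
union is `L⁺(F)`, and every future orbit of every point has one of them as its limit set. -/
theorem finally_periodic_of_eventually_disjoint_from_sepLine
    {n m : ℕ} {X : Type} [MetricSpace X]
    (j : X → EuclideanSpace ℝ (Fin n))
    (hj : Topology.IsEmbedding j)
    (hball : Nonempty (X ≃ₜ (Metric.closedBall (0 : EuclideanSpace ℝ (Fin n)) 1)))
    (hfr : ∀ (M : Set X) (y : X), y ∉ M →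
      Metric.infDist y M = Metric.infDist y (frontier M))
    (P : Fin m → Set X) (f : Fin m → X → X) (lamF : ℝ)
    (hP : IsFinPartition P) (hf : IsPCMap j P f) (hlc : LocContr P f lamF)
    (k₀ : ℕ) (hk₀ : 1 ≤ k₀)
    (hdisj : iterSet P f k₀ Set.univ ∩ sepLine P = ∅) :
    ∃ (N : ℕ) (L : Fin N → Set X) (p : Fin N → ℕ), 1 ≤ N ∧
      (∀ a, IsPeriodicOrbit P f (L a) (p a)) ∧
      limitSet P f = (⋃ a, L a) ∧
      ∀ o : ℕ → X, IsOrbit P f o → ∃ a, orbitLimit o = L a := by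
  obtain ⟨e⟩ := hball
  obtain ⟨-, hPc, hPu, hPd⟩ := hP
  obtain ⟨hl0, hl1, hcon⟩ := hlc
  have : CompactSpace X := by
    have : CompactSpace (Metric.closedBall (0 : EuclideanSpace ℝ (Fin n)) 1) :=
      isCompact_iff_compactSpace.1 (isCompact_closedBall _ _)
    exact e.symm.compactSpace
  have x₀ : X := e.symm ⟨0, by simp⟩
  set K := iterSet P f k₀ Set.univ with hKdef
  have hK : IsCompact K := isCompact_iterSet hPc (fun i => (hf i).1) k₀
  have hint : ∀ x ∈ K, ∀ i, x ∈ P i → x ∈ interior (P i) := by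
    intro x hx i hi
    by_contra hni
    have hS : x ∈ sepLine P := Set.mem_iUnion.2 ⟨i, subset_closure hi, hni⟩
    exact (Set.eq_empty_iff_forall_notMem.1 hdisj) x ⟨hx, hS⟩
  have huniq : ∀ x, ∀ i i', x ∈ interior (P i) → x ∈ interior (P i') → i = i' := by
    intro x i i' h h'
    by_contra hne
    exact (Set.eq_empty_iff_forall_notMem.1 (hPd i i' hne)) x ⟨h, h'⟩
  have hcov : ∀ x, ∃ i, x ∈ P i := fun x => Set.mem_iUnion.1 (hPu ▸ Set.mem_univ x)
  -- The selection `g` of `F`; off the separation line it is the only one.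
  choose ι hι using hcov
  let g : X → X := fun x => f (ι x) x
  have hgu : ∀ x ∈ K, ∀ i, x ∈ P i → f i x = g x := by
    intro x hx i hi
    rw [huniq x i (ι x) (hint x hx i hi) (hint x hx _ (hι x))]
  have hm : Set.MapsTo g K K := fun x hx =>
    iterSet_succ_subset k₀ (Set.mem_iUnion.2 ⟨ι x, x, ⟨hι x, hx⟩, rfl⟩)
  obtain ⟨δ, hδ, hleb⟩ := lebesgue_number_lemma_of_metric hK
    (c := fun i => interior (P i)) (fun i => isOpen_interior)
    (fun x hx => Set.mem_iUnion.2 ⟨ι x, hint x hx _ (hι x)⟩)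
  have hc : ∀ x ∈ K, ∀ y ∈ K, dist x y < δ → dist (g x) (g y) ≤ lamF * dist x y := by
    intro x hx y hy hd
    obtain ⟨i, hi⟩ := hleb x hx
    have hxi : x ∈ P i := interior_subset (hi (Metric.mem_ball_self hδ))
    have hyi : y ∈ P i := interior_subset (hi (by rwa [Metric.mem_ball, dist_comm]))
    rw [← hgu x hx i hxi, ← hgu y hy i hyi]
    exact hcon i x hxi y hyi
  have hgorb : ∀ z, IsOrbit P f (fun n => g^[n] z) := fun z k =>
    ⟨ι (g^[k] z), hι _, iterate_succ_apply' g k z⟩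
  have hper : ∀ z ∈ periodicPts g, (fun n => g^[n] z).Periodic (minimalPeriod g z) := by
    intro z _ k
    show g^[k + minimalPeriod g z] z = g^[k] z
    rw [iterate_add_apply, iterate_minimalPeriod]
  have hlim : ∀ o, IsOrbit P f o → ∃ z ∈ K, z ∈ periodicPts g ∧
      orbitLimit o = Set.range (fun n => g^[n] z) := by
    intro o ho
    have hoK : ∀ n, o (n + k₀) ∈ K ∧ o (n + k₀) = g^[n] (o k₀) := by
      intro n
      induction n with
      | zero => simpa using isOrbit_mem_iterSet ho k₀
      | succ n ih =>
        obtain ⟨i, hi, he⟩ := ho (n + k₀)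
        rw [hgu _ ih.1 i hi] at he
        rw [Nat.add_right_comm, he, iterate_succ_apply', ← ih.2]
        exact ⟨hm ih.1, rfl⟩
    obtain ⟨z, hzK, hzp, c, ht⟩ := exists_periodic_attractor hl0 hl1 hδ hK hm hc
      (x := o k₀) (by simpa using (hoK 0).1)
    refine ⟨z, hzK, hzp, orbitLimit_eq_range (c := c + k₀)
      (minimalPeriod_pos_of_mem_periodicPts hzp) (hper z hzp) (ht.congr fun k => ?_)⟩
    rw [← (hoK _).2, add_assoc]
  have hfin := finite_periodic hl0 hl1 hδ hK hm hc
  obtain ⟨N, z, -, hz⟩ := hfin.fin_param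
  have hzmem : ∀ a, z a ∈ K ∧ z a ∈ periodicPts g := fun a => by
    have : z a ∈ Set.range z := ⟨a, rfl⟩
    rwa [hz] at this
  have hlim' : ∀ o, IsOrbit P f o → ∃ a, orbitLimit o = Set.range (fun n => g^[n] (z a)) := by
    intro o ho
    obtain ⟨w, hwK, hwp, hw⟩ := hlim o ho
    obtain ⟨a, rfl⟩ : w ∈ Set.range z := by rw [hz]; exact ⟨hwK, hwp⟩
    exact ⟨a, hw⟩
  refine ⟨N, fun a => Set.range (fun n => g^[n] (z a)), fun a => minimalPeriod g (z a),
    ?_, fun a => ?_, ?_, hlim'⟩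
  · obtain ⟨a, -⟩ := hlim' _ (hgorb x₀)
    exact a.pos
  · refine ⟨minimalPeriod_pos_of_mem_periodicPts (hzmem a).2, _, hgorb (z a),
      hper _ (hzmem a).2, fun q hq h => ?_, rfl⟩
    exact IsPeriodicPt.minimalPeriod_le hq (by simpa [IsPeriodicPt, IsFixedPt] using h 0)
  · apply Set.Subset.antisymm
    · intro y hy
      obtain ⟨o, ho, hyo⟩ := Set.mem_iUnion₂.1 hy
      obtain ⟨a, ha⟩ := hlim' o ho
      exact Set.mem_iUnion.2 ⟨a, ha ▸ hyo⟩
    · refine Set.iUnion_subset fun a y hy => Set.mem_iUnion₂.2 ⟨_, hgorb (z a), ?_⟩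
      rw [orbitLimit_eq_range (c := 0) (minimalPeriod_pos_of_mem_periodicPts (hzmem a).2)
        (hper _ (hzmem a).2) (by simp)]
      exact hy
end

section
/- (Proposition, second part) Let P = {B_i}_{1≤i≤m} and P̂ = {A_i}_{1≤i≤m} be finite partitions of B with the same number m of pieces, with separation lines S = ∪_i ∂B_i and Ŝ = ∪_i ∂A_i. If d(P,P̂) < ε, then for all i ≠ j such that B_i ∩ A_j ≠ ∅ and for every point p ∈ B_i ∩ A_j, one has dist(p, S) < ε and dist(p, Ŝ) < ε. -/
open PWC

/-- The empty set has `infDist` equal to `0`, so passing from `frontier (P k)` to the larger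
`sepLine P` requires the frontier to be nonempty; this follows from the frontier assumption itself,
as the distance from `x` to the closed set `P k` is positive. -/
lemma infDist_sepLine_lt_of_mem {m : ℕ} {X : Type} [MetricSpace X]
    (hfr : ∀ (M : Set X) (y : X), y ∉ M →
      Metric.infDist y M = Metric.infDist y (frontier M))
    {P : Fin m → Set X} (hP : IsFinPartition P) {ε : ℝ} {i k : Fin m} (hik : i ≠ k)
    {x : X} (hx : x ∈ P i) (hd : Metric.infDist x (P k) < ε) :
    Metric.infDist x (sepLine P) < ε := by
  obtain ⟨hne, hcomp, -, hint⟩ := hP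
  by_cases hxk : x ∈ P k
  · have hmem : x ∈ sepLine P := by
      by_contra hnot
      have hall : ∀ l, x ∈ P l → x ∈ interior (P l) := fun l hl => by
        by_contra hl'
        exact hnot (Set.mem_iUnion.2 ⟨l, subset_closure hl, hl'⟩)
      have : x ∈ interior (P i) ∩ interior (P k) := ⟨hall i hx, hall k hxk⟩
      rw [hint i k hik] at this
      exact this
    rw [Metric.infDist_zero_of_mem hmem]
    exact Metric.infDist_nonneg.trans_lt hd
  · have hpos : 0 < Metric.infDist x (P k) :=
      ((hcomp k).isClosed.notMem_iff_infDist_pos (hne k)).1 hxk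
    rw [hfr _ _ hxk] at hpos hd
    have hfne : (frontier (P k)).Nonempty := by
      by_contra h
      rw [Set.not_nonempty_iff_eq_empty.1 h, Metric.infDist_empty] at hpos
      exact lt_irrefl _ hpos
    exact (Metric.infDist_le_infDist_of_subset
      (Set.subset_iUnion (fun l => frontier (P l)) k) hfne).trans_lt hd

/-- Proposition, second part: If `d(P, P̂) < ε` then every point of
`B_i ∩ A_j` with `i ≠ j` is within `ε` of both separation lines. -/
theorem points_in_crossed_pieces_close_to_sepLines
    {n m : ℕ} {X : Type} [MetricSpace X]
    (j : X → EuclideanSpace ℝ (Fin n))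
    (hj : Topology.IsEmbedding j)
    (hball : Nonempty (X ≃ₜ (Metric.closedBall (0 : EuclideanSpace ℝ (Fin n)) 1)))
    (hfr : ∀ (M : Set X) (y : X), y ∉ M →
      Metric.infDist y M = Metric.infDist y (frontier M))
    (P Q : Fin m → Set X) (hP : IsFinPartition P) (hQ : IsFinPartition Q)
    (ε : ℝ) (hd : ∀ i, Metric.hausdorffDist (Q i) (P i) < ε) :
    ∀ i i' : Fin m, i ≠ i' → ∀ pt ∈ P i ∩ Q i',
      Metric.infDist pt (sepLine P) < ε ∧ Metric.infDist pt (sepLine Q) < ε := by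
  have hfin : ∀ k, Metric.hausdorffEDist (Q k) (P k) ≠ ⊤ := fun k =>
    Metric.hausdorffEDist_ne_top_of_nonempty_of_bounded (hQ.1 k) (hP.1 k)
      (hQ.2.1 k).isBounded (hP.2.1 k).isBounded
  rintro i i' hii' pt ⟨hptP, hptQ⟩
  constructor
  · exact infDist_sepLine_lt_of_mem hfr hP hii' hptP
      ((Metric.infDist_le_hausdorffDist_of_mem hptQ (hfin i')).trans_lt (hd i'))
  · refine infDist_sepLine_lt_of_mem hfr hQ hii'.symm hptQ
      ((Metric.infDist_le_hausdorffDist_of_mem hptP ?_).trans_lt ?_)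
    · rw [Metric.hausdorffEDist_comm]
      exact hfin i
    · rw [Metric.hausdorffDist_comm]
      exact hd i
end

section
/- Let F = {f_i : B_i → int(B)} be a piecewise continuous map on (B,{B_i}) with the separation property, and let F⁻¹ : F(B) → B be its (well-defined, continuous) inverse, where F(B) = ∪_i f_i(B_i) and F⁻¹(z) = f_i⁻¹(z) for z ∈ f_i(B_i). Then for every x₀ ∈ B and every future orbit o⁺(x₀) of x₀, the limit set L = L⁺(o⁺(x₀)) satisfies L ⊆ F(B) and is invariant: the image of L under F⁻¹ equals L, i.e. F⁻¹(L) = L. -/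
open PWC

/-- Every subsequence of an orbit has a further subsequence that follows a single branch `f i`,
converges to a point `x` of `P i`, and whose successors converge to `f i x`. -/
theorem exists_subseq_branch {m : ℕ} {X : Type} [MetricSpace X]
    {P : Fin m → Set X} {f : Fin m → X → X} (hP : ∀ i, IsCompact (P i))
    (hf : ∀ i, ContinuousOn (f i) (P i)) {o : ℕ → X} (ho : IsOrbit P f o) (φ : ℕ → ℕ) :
    ∃ (i : Fin m) (x : X) (ψ : ℕ → ℕ), x ∈ P i ∧ StrictMono ψ ∧
      Filter.Tendsto (fun k => o (φ (ψ k))) Filter.atTop (nhds x) ∧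
      Filter.Tendsto (fun k => o (φ (ψ k) + 1)) Filter.atTop (nhds (f i x)) := by
  choose c hcP hcf using ho
  obtain ⟨i, hi⟩ : ∃ i, ∃ᶠ k in Filter.atTop, c (φ k) = i := by
    by_contra! h
    obtain ⟨k, hk⟩ := (Filter.eventually_all.2 h).exists
    exact hk _ rfl
  obtain ⟨ψ, hψ, hψi⟩ := Filter.extraction_of_frequently_atTop hi
  have hmem : ∀ k, o (φ (ψ k)) ∈ P i := fun k => hψi k ▸ hcP (φ (ψ k))
  have hsucc : ∀ k, o (φ (ψ k) + 1) = f i (o (φ (ψ k))) := fun k => by rw [hcf, hψi]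
  obtain ⟨x, hx, χ, hχ, hlim⟩ := (hP i).tendsto_subseq hmem
  refine ⟨i, x, ψ ∘ χ, hx, hψ.comp hχ, hlim, ?_⟩
  simp only [Function.comp_apply, hsucc]
  exact (hf i x hx).tendsto.comp
    (tendsto_nhdsWithin_iff.2 ⟨hlim, Filter.Eventually.of_forall fun k => hmem (χ k)⟩)

/-- Every limit point of an orbit is the image, under some branch, of a limit point. -/
theorem exists_preimage_mem_orbitLimit {m : ℕ} {X : Type} [MetricSpace X]
    {P : Fin m → Set X} {f : Fin m → X → X} (hP : ∀ i, IsCompact (P i))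
    (hf : ∀ i, ContinuousOn (f i) (P i)) {o : ℕ → X} (ho : IsOrbit P f o) {z : X}
    (hz : z ∈ orbitLimit o) : ∃ i, ∃ x ∈ P i, x ∈ orbitLimit o ∧ f i x = z := by
  obtain ⟨φ, hφ, hlim⟩ := hz
  -- Discarding `φ 0` makes every remaining time positive, so predecessors exist.
  have hpos : ∀ k, φ (k + 1) - 1 + 1 = φ (k + 1) := fun k => by
    have := hφ (Nat.succ_pos k)
    simp only [Nat.succ_eq_add_one] at this
    omega
  have hmono : StrictMono fun k => φ (k + 1) - 1 := fun a b hab => by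
    have h := hφ (Nat.add_lt_add_right hab 1)
    have ha := hpos a
    have hb := hpos b
    simp only
    omega
  obtain ⟨i, x, ψ, hx, hψ, h₁, h₂⟩ :=
    exists_subseq_branch hP hf ho fun k => φ (k + 1) - 1
  refine ⟨i, x, hx, ⟨_, hmono.comp hψ, h₁⟩, tendsto_nhds_unique h₂ ?_⟩
  simp only [hpos]
  exact hlim.comp ((Filter.tendsto_add_atTop_nat 1).comp hψ.tendsto_atTop)

/-- Every limit point of an orbit has, under some branch, an image that is a limit point. -/
theorem exists_image_mem_orbitLimit {m : ℕ} {X : Type} [MetricSpace X]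
    {P : Fin m → Set X} {f : Fin m → X → X} (hP : ∀ i, IsCompact (P i))
    (hf : ∀ i, ContinuousOn (f i) (P i)) {o : ℕ → X} (ho : IsOrbit P f o) {y : X}
    (hy : y ∈ orbitLimit o) : ∃ i, y ∈ P i ∧ f i y ∈ orbitLimit o := by
  obtain ⟨φ, hφ, hlim⟩ := hy
  obtain ⟨i, x, ψ, hx, hψ, h₁, h₂⟩ := exists_subseq_branch hP hf ho φ
  obtain rfl : x = y := tendsto_nhds_unique h₁ (hlim.comp hψ.tendsto_atTop)
  exact ⟨i, hx, fun k => φ (ψ k) + 1, fun a b hab => Nat.add_lt_add_right (hφ (hψ hab)) 1, h₂⟩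

/-- For a piecewise continuous map with the separation property, the
limit set `L` of any future orbit satisfies `L ⊆ F(B)` and `F⁻¹(L) = L`. -/
theorem orbitLimit_invariant
    {n m : ℕ} {X : Type} [MetricSpace X]
    (j : X → EuclideanSpace ℝ (Fin n))
    (hj : Topology.IsEmbedding j)
    (hball : Nonempty (X ≃ₜ (Metric.closedBall (0 : EuclideanSpace ℝ (Fin n)) 1)))
    (P : Fin m → Set X) (f : Fin m → X → X)
    (hP : IsFinPartition P) (hf : IsPCMap j P f) (hsep : SepProp P f)
    (Finv : X → X) (hFinv : ∀ i, ∀ x ∈ P i, Finv (f i x) = x) :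
    ∀ o : ℕ → X, IsOrbit P f o →
      orbitLimit o ⊆ setImage P f Set.univ ∧ Finv '' orbitLimit o = orbitLimit o := by
  have hcpt := hP.2.1
  have hcont : ∀ i, ContinuousOn (f i) (P i) := fun i => (hf i).1
  intro o ho
  refine ⟨fun z hz => ?_, Set.Subset.antisymm ?_ fun y hy => ?_⟩
  · obtain ⟨i, x, hx, -, rfl⟩ := exists_preimage_mem_orbitLimit hcpt hcont ho hz
    exact Set.mem_iUnion.2 ⟨i, x, ⟨hx, Set.mem_univ x⟩, rfl⟩
  · rintro _ ⟨z, hz, rfl⟩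
    obtain ⟨i, x, hx, hxL, rfl⟩ := exists_preimage_mem_orbitLimit hcpt hcont ho hz
    rwa [hFinv i x hx]
  · obtain ⟨i, hyi, hfy⟩ := exists_image_mem_orbitLimit hcpt hcont ho hy
    exact ⟨f i y, hfy, hFinv i y hyi⟩
end

section
/- (Statements Q and T) Let F = {f_i : B_i → int(B)} be a locally contractive piecewise continuous map on (B,{B_i}) with the separation property, with separation line S, and suppose k₀ ≥ 1 satisfies d := dist(F^{k₀}(B), S) > 0. Then there exist ε₁ ∈ (0, d/3) and k ≥ k₀ such that for every ε₁-perturbation G of F (locally contractive piecewise continuous, with partition {A_i} and separation line Ŝ) with all atoms of generation k of F and of G of diameter less than d/6, and for every word I ∈ {1,…,m}^k with nonempty atoms A = A_I(F) and Â = A_I(G): there is a unique index i such that A ⊆ int(B_i), for this same index i one has Â ⊆ int(A_i), and the forward itineraries of A under F and of Â under G coincide: for every h ≥ 0 there is an index i_h with F^h(A) ⊆ int(B_{i_h}) and G^h(Â) ⊆ int(A_{i_h}). -/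
open PWC

namespace PWC

variable {X : Type} [MetricSpace X] {m : ℕ}

theorem IsFinPartition.exists_mem {P : Fin m → Set X} (hP : IsFinPartition P) (x : X) :
    ∃ i, x ∈ P i := by
  have h : x ∈ ⋃ i, P i := by rw [hP.2.2.1]; trivial
  simpa using h

/-! ### Iterated images and atoms -/

theorem setImage_mono {P : Fin m → Set X} {f : Fin m → X → X} {H K : Set X} (h : H ⊆ K) :
    setImage P f H ⊆ setImage P f K :=
  Set.iUnion_mono fun _ => Set.image_mono (Set.inter_subset_inter_right _ h)

theorem iterSet_succ_subset (P : Fin m → Set X) (f : Fin m → X → X) (k : ℕ) :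
    iterSet P f (k + 1) Set.univ ⊆ iterSet P f k Set.univ := by
  induction k with
  | zero => exact Set.subset_univ _
  | succ k ih => exact setImage_mono ih

theorem atom_subset_iterSet (P : Fin m → Set X) (f : Fin m → X → X) (w : List (Fin m)) :
    atom P f w ⊆ iterSet P f w.length Set.univ := by
  induction w with
  | nil => exact Set.subset_univ _
  | cons i w ih =>
    intro x hx
    obtain ⟨u, ⟨hu, huw⟩, rfl⟩ := hx
    exact Set.mem_iUnion.2 ⟨i, u, ⟨hu, ih huw⟩, rfl⟩

theorem atom_subset_iterSet_of_le (P : Fin m → Set X) (f : Fin m → X → X) (w : List (Fin m))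
    {k : ℕ} (hk : k ≤ w.length) : atom P f w ⊆ iterSet P f k Set.univ :=
  (atom_subset_iterSet P f w).trans
    (antitone_nat_of_succ_le (f := fun k => iterSet P f k Set.univ)
      (iterSet_succ_subset P f) hk)

/-- If an atom meets only the piece `i`, its image is the atom of the word prolonged by `i`. -/
theorem setImage_atom_eq {P : Fin m → Set X} {f : Fin m → X → X} {w : List (Fin m)} {i : Fin m}
    (h : ∀ y ∈ atom P f w, ∀ l, y ∈ P l → l = i) :
    setImage P f (atom P f w) = atom P f (i :: w) := by
  ext z
  constructor
  · intro hz
    obtain ⟨l, u, ⟨hu, huw⟩, rfl⟩ := Set.mem_iUnion.1 hz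
    obtain rfl := h u huw l hu
    exact ⟨u, ⟨hu, huw⟩, rfl⟩
  · intro hz
    exact Set.mem_iUnion.2 ⟨i, hz⟩

theorem atom_cons_nonempty {P : Fin m → Set X} {f : Fin m → X → X} {w : List (Fin m)} {i : Fin m}
    (h : (atom P f w).Nonempty) (hs : atom P f w ⊆ interior (P i)) :
    (atom P f (i :: w)).Nonempty := by
  obtain ⟨x, hx⟩ := h
  exact ⟨f i x, x, ⟨interior_subset (hs hx), hx⟩, rfl⟩

/-! ### Points far from the separation line -/

/-- A point `x ∈ P i` whose distance to the separation line is at least `d` has distance at least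
`d` to every piece other than `P i`. -/
theorem eq_of_mem_of_dist_lt {P : Fin m → Set X} (hP : IsFinPartition P)
    (hfr : ∀ (M : Set X) (y : X), y ∉ M →
      Metric.infDist y M = Metric.infDist y (frontier M))
    {d : ℝ} (hd : 0 < d) {x : X} (hx : d ≤ Metric.infDist x (sepLine P))
    {i l : Fin m} (hi : x ∈ P i) {y : X} (hy : y ∈ P l) (hxy : dist x y < d) : l = i := by
  by_contra hne
  have hint : ∀ a, x ∈ P a → x ∈ interior (P a) := by
    intro a ha
    by_contra hna
    have hS : x ∈ sepLine P := Set.mem_iUnion.2 ⟨a, subset_closure ha, hna⟩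
    have := Metric.infDist_zero_of_mem hS
    linarith
  by_cases hl : x ∈ P l
  · have h : x ∈ interior (P l) ∩ interior (P i) := ⟨hint l hl, hint i hi⟩
    rw [hP.2.2.2 l i hne] at h
    exact h
  · have h1 := hfr (P l) x hl
    have h2 : Metric.infDist x (P l) ≤ dist x y := Metric.infDist_le_dist_of_mem hy
    rcases (frontier (P l)).eq_empty_or_nonempty with he | hn
    · -- An empty frontier would give `infDist x (P l) = 0`, putting `x` in the closed set `P l`.
      rw [he, Metric.infDist_empty] at h1
      exact hl (((hP.2.1 l).isClosed.mem_iff_infDist_zero (hP.1 l)).2 h1)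
    · have h3 : Metric.infDist x (sepLine P) ≤ Metric.infDist x (frontier (P l)) :=
        Metric.infDist_le_infDist_of_subset (Set.subset_iUnion (fun a => frontier (P a)) l) hn
      linarith

/-- A ball that meets no piece other than `P i` lies in `P i`, since the pieces cover. -/
theorem mem_interior_of_ball {P : Fin m → Set X} (hP : IsFinPartition P) {i : Fin m} {x : X}
    {r : ℝ} (h : ∀ y l, dist x y < r → y ∈ P l → l = i) {y : X} (hy : dist x y < r) :
    y ∈ interior (P i) := by
  refine mem_interior.2 ⟨Metric.ball x r, ?_, Metric.isOpen_ball, by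
    rwa [Metric.mem_ball, dist_comm]⟩
  intro z hz
  obtain ⟨l, hl⟩ := hP.exists_mem z
  have := h z l (by rwa [Metric.mem_ball, dist_comm] at hz) hl
  exact this ▸ hl

/-- Stability of `eq_of_mem_of_dist_lt` under perturbation of the partition, at the cost of `ε`
in the radius. -/
theorem eq_of_mem_perturbed {P Q : Fin m → Set X} (hP : IsFinPartition P) (hQ : IsFinPartition Q)
    {ε : ℝ} (hPQ : ∀ i, Metric.hausdorffDist (P i) (Q i) < ε)
    {d : ℝ} {x : X} {i : Fin m} (h : ∀ y l, dist x y < d → y ∈ P l → l = i)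
    (y : X) (l : Fin m) (hxy : dist x y < d - ε) (hy : y ∈ Q l) : l = i := by
  obtain ⟨p, hp, hyp⟩ := Metric.exists_dist_lt_of_hausdorffDist_lt' hy (hPQ l)
    (Metric.hausdorffEDist_ne_top_of_nonempty_of_bounded (hP.1 l) (hQ.1 l)
      (hP.2.1 l).isBounded (hQ.2.1 l).isBounded)
  have := dist_triangle x y p
  rw [dist_comm] at hyp
  exact h p l (by linarith) hp

/-! ### Comparison of corresponding atoms -/

/-- Corresponding atoms are close: the distance is contracted by `μ`, up to an error `ε`, at each
letter after the first `k₀`. The hypothesis `hloc` says that the points of `F`-atoms of generation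
at least `k₀` that belong to `P i` also belong to `Q i`. -/
theorem dist_atom_le {P Q : Fin m → Set X} {f g : Fin m → X → X} {ε μ c C lamG : ℝ} {k₀ : ℕ}
    (hfg : ∀ i, ∀ x ∈ P i ∩ Q i, dist (f i x) (g i x) < ε)
    (hg : LocContr Q g lamG) (hμ : lamG ≤ μ) (hc : 0 ≤ c) (hε : ε ≤ (1 - μ) * c)
    (hC : ∀ x y : X, dist x y ≤ C)
    (hloc : ∀ w : List (Fin m), k₀ ≤ w.length → ∀ x ∈ atom P f w, ∀ i, x ∈ P i → x ∈ Q i)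
    (t : ℕ) : ∀ w : List (Fin m), w.length = k₀ + t → ∀ x ∈ atom P f w, ∀ y ∈ atom Q g w,
      dist x y ≤ μ ^ t * C + c := by
  induction t with
  | zero =>
    intro w _ x _ y _
    have := hC x y
    simpa using this.trans (le_add_of_nonneg_right hc)
  | succ t ih =>
    intro w hw x hx y hy
    cases w with
    | nil => simp at hw
    | cons i w =>
      have hw' : w.length = k₀ + t := by simp at hw; omega
      obtain ⟨u, ⟨huP, huw⟩, rfl⟩ := hx
      obtain ⟨v, ⟨hvQ, hvw⟩, rfl⟩ := hy
      have huQ : u ∈ Q i := hloc w (by omega) u huw i huP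
      have h1 := hfg i u ⟨huP, huQ⟩
      have h2 := hg.2.2 i u huQ v hvQ
      have h3 := dist_triangle (f i u) (g i u) (g i v)
      have h4 := ih w hw' u huw v hvw
      have h5 : lamG * dist u v ≤ μ * dist u v := mul_le_mul_of_nonneg_right hμ dist_nonneg
      have h6 : μ * dist u v ≤ μ * (μ ^ t * C + c) :=
        mul_le_mul_of_nonneg_left h4 (hg.1.le.trans hμ)
      have h7 : μ ^ (t + 1) * C + c = μ * (μ ^ t * C + c) + (1 - μ) * c := by ring
      linarith

end PWC

/-- Statements Q and T: If `d := dist(F^{k₀}(B), S) > 0`, there exist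
`ε₁ ∈ (0, d/3)` and `k ≥ k₀` such that for every `ε₁`-perturbation `G` of `F` whose atoms
of generation `k` (and those of `F`) have diameter less than `d/6`, each pair of
corresponding nonempty atoms `A`, `Â` lies in the interiors of the *same-indexed*
continuity pieces, with unique such index for `A`, and the forward itineraries of `A`
under `F` and of `Â` under `G` coincide. -/
theorem itineraries_of_corresponding_atoms_coincide
    {n m : ℕ} {X : Type} [MetricSpace X]
    (j : X → EuclideanSpace ℝ (Fin n))
    (hj : Topology.IsEmbedding j)
    (hball : Nonempty (X ≃ₜ (Metric.closedBall (0 : EuclideanSpace ℝ (Fin n)) 1)))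
    (hfr : ∀ (M : Set X) (y : X), y ∉ M →
      Metric.infDist y M = Metric.infDist y (frontier M))
    (P : Fin m → Set X) (f : Fin m → X → X) (lamF : ℝ)
    (hP : IsFinPartition P) (hf : IsPCMap j P f) (hlc : LocContr P f lamF)
    (hsep : SepProp P f)
    (k₀ : ℕ) (hk₀ : 1 ≤ k₀) (d : ℝ) (hd : 0 < d)
    (hdS : ∀ x ∈ iterSet P f k₀ Set.univ, d ≤ Metric.infDist x (sepLine P)) :
    ∃ ε₁ : ℝ, 0 < ε₁ ∧ ε₁ < d / 3 ∧ ∃ k : ℕ, k₀ ≤ k ∧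
      ∀ (Q : Fin m → Set X) (g : Fin m → X → X) (lamG : ℝ),
        IsFinPartition Q → IsPCMap j Q g → LocContr Q g lamG →
        IsPerturbation P f lamF Q g lamG ε₁ →
        (∀ w : List (Fin m), w.length = k →
          Metric.diam (atom P f w) < d / 6 ∧ Metric.diam (atom Q g w) < d / 6) →
        ∀ w : List (Fin m), w.length = k →
          (atom P f w).Nonempty → (atom Q g w).Nonempty →
          ∃ i : Fin m, atom P f w ⊆ interior (P i) ∧
            (∀ i', atom P f w ⊆ interior (P i') → i' = i) ∧
            atom Q g w ⊆ interior (Q i) ∧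
            ∀ h : ℕ, ∃ ih : Fin m,
              iterSet P f h (atom P f w) ⊆ interior (P ih) ∧
              iterSet Q g h (atom Q g w) ⊆ interior (Q ih) := by
  classical
  obtain ⟨e⟩ := hball
  have hcX : CompactSpace X := e.symm.compactSpace
  obtain ⟨C, hC⟩ : ∃ C : ℝ, ∀ x y : X, dist x y ≤ C :=
    ⟨Metric.diam (Set.univ : Set X), fun x y =>
      Metric.dist_le_diam_of_mem isCompact_univ.isBounded trivial trivial⟩
  obtain ⟨hl0, hl1, -⟩ := id hlc
  -- `μ` bounds the contraction rate of every perturbation with `ε₁ ≤ 1 - μ = μ - lamF`.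
  set μ : ℝ := (1 + lamF) / 2 with hμ
  have hμ0 : 0 < μ := by linarith
  have hμ1 : μ < 1 := by linarith
  obtain ⟨T, hT⟩ : ∃ T : ℕ, μ ^ T * C < d / 12 := by
    have h := (tendsto_pow_atTop_nhds_zero_of_lt_one hμ0.le hμ1).mul_const C
    rw [zero_mul] at h
    exact (h.eventually_lt_const (by linarith : (0 : ℝ) < d / 12)).exists
  refine ⟨min (d / 4) (min (1 - μ) ((1 - μ) * (d / 12))), ?_, ?_, k₀ + T, Nat.le_add_right _ _, ?_⟩
  · exact lt_min (by linarith) (lt_min (by linarith) (mul_pos (by linarith) (by linarith)))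
  · exact (min_le_left _ _).trans_lt (by linarith)
  set ε := min (d / 4) (min (1 - μ) ((1 - μ) * (d / 12))) with hε
  have hε1 : ε ≤ d / 4 := min_le_left _ _
  have hε2 : ε ≤ 1 - μ := (min_le_right _ _).trans (min_le_left _ _)
  have hε3 : ε ≤ (1 - μ) * (d / 12) := (min_le_right _ _).trans (min_le_right _ _)
  rintro Q g lamG hQ - hg ⟨hfg, hlam, hPQ⟩ - w hw hA hB
  have hlamG : lamG ≤ μ := by
    have := (abs_lt.1 hlam).1
    linarith
  have hfar : ∀ w : List (Fin m), k₀ ≤ w.length → ∀ x ∈ atom P f w, ∀ i, x ∈ P i →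
      ∀ y l, dist x y < d → y ∈ P l → l = i := fun w hw x hx i hi y l hxy hy =>
    eq_of_mem_of_dist_lt hP hfr hd (hdS x (atom_subset_iterSet_of_le P f w hw hx)) hi hy hxy
  have hfarQ : ∀ w : List (Fin m), k₀ ≤ w.length → ∀ x ∈ atom P f w, ∀ i, x ∈ P i →
      ∀ y l, dist x y < d - ε → y ∈ Q l → l = i := fun w hw x hx i hi =>
    eq_of_mem_perturbed hP hQ hPQ (hfar w hw x hx i hi)
  have hclose : ∀ w : List (Fin m), k₀ + T ≤ w.length → ∀ x ∈ atom P f w, ∀ y ∈ atom Q g w,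
      dist x y < d / 6 := by
    intro w hw x hx y hy
    obtain ⟨t, ht⟩ := Nat.exists_eq_add_of_le hw
    have h := dist_atom_le hfg hg hlamG (by linarith) hε3 hC
      (fun w hw x hx i hi => interior_subset (mem_interior_of_ball hQ (hfarQ w hw x hx i hi)
        (by rw [dist_self]; linarith))) (T + t) w (by omega) x hx y hy
    have hC0 : 0 ≤ C := dist_nonneg.trans (hC x x)
    have h2 : μ ^ (T + t) * C ≤ μ ^ T * C :=
      mul_le_mul_of_nonneg_right
        (pow_le_pow_of_le_one hμ0.le hμ1.le (Nat.le_add_right _ _)) hC0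
    linarith
  -- A pair of corresponding nonempty atoms lies in a single pair of corresponding pieces, and its
  -- images form such a pair again.
  have step : ∀ w : List (Fin m), k₀ + T ≤ w.length → (atom P f w).Nonempty →
      (atom Q g w).Nonempty → ∃ i, atom P f w ⊆ interior (P i) ∧ atom Q g w ⊆ interior (Q i) ∧
        setImage P f (atom P f w) = atom P f (i :: w) ∧
        setImage Q g (atom Q g w) = atom Q g (i :: w) := by
    rintro w hw ⟨x, hx⟩ ⟨y, hy⟩
    obtain ⟨i, hi⟩ := hP.exists_mem x
    have hk : k₀ ≤ w.length := by omega
    -- Two points of the `F`-atom are both within `d / 6` of the point `y` of the `G`-atom.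
    have hPd : ∀ z ∈ atom P f w, dist x z < d := by
      intro z hz
      have h1 := hclose w hw x hx y hy
      have h2 := hclose w hw z hz y hy
      have h3 := dist_triangle_right x z y
      linarith
    have hQd : ∀ z ∈ atom Q g w, dist x z < d - ε := by
      intro z hz
      have h1 := hclose w hw x hx z hz
      linarith
    exact ⟨i, fun z hz => mem_interior_of_ball hP (hfar w hk x hx i hi) (hPd z hz),
      fun z hz => mem_interior_of_ball hQ (hfarQ w hk x hx i hi) (hQd z hz),
      setImage_atom_eq fun z hz l hl => hfar w hk x hx i hi z l (hPd z hz) hl,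
      setImage_atom_eq fun z hz l hl => hfarQ w hk x hx i hi z l (hQd z hz) hl⟩
  have iter : ∀ h : ℕ, ∃ v : List (Fin m), k₀ + T ≤ v.length ∧ (atom P f v).Nonempty ∧
      (atom Q g v).Nonempty ∧ iterSet P f h (atom P f w) = atom P f v ∧
      iterSet Q g h (atom Q g w) = atom Q g v := by
    intro h
    induction h with
    | zero => exact ⟨w, hw.ge, hA, hB, rfl, rfl⟩
    | succ h ih =>
      obtain ⟨v, hv, hvA, hvB, h1, h2⟩ := ih
      obtain ⟨i, hi, hi', h3, h4⟩ := step v hv hvA hvB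
      refine ⟨i :: v, by simp only [List.length_cons]; omega, atom_cons_nonempty hvA hi,
        atom_cons_nonempty hvB hi', ?_, ?_⟩
      · rw [iterSet, h1, h3]
      · rw [iterSet, h2, h4]
  obtain ⟨i, hi, hi', -, -⟩ := step w hw.ge hA hB
  refine ⟨i, hi, ?_, hi', ?_⟩
  · intro i' h'
    by_contra hne
    obtain ⟨x, hx⟩ := hA
    have h : x ∈ interior (P i') ∩ interior (P i) := ⟨h' hx, hi hx⟩
    rw [hP.2.2.2 i' i hne] at h
    exact h
  · intro h
    obtain ⟨v, hv, hvA, hvB, h1, h2⟩ := iter h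
    obtain ⟨l, hl, hl', -, -⟩ := step v hv hvA hvB
    exact ⟨l, h1 ▸ hl, h2 ▸ hl'⟩
end
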